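/- arXiv:1608.04218 — 2 statements merged into one kernel-verified Lean document; each statement's English description precedes it below -/
import Mathlib

section
/- Let H be a complex Hilbert space with dim H > k (possibly infinite-dimensional), k ≥ 1 a natural number, and A a bounded linear operator on H. Then W_{𝒫_k}(A) = W(A), i.e., λ ∈ ℂ is an eigenvalue of the compression A_P for some orthogonal projection P with k-dimensional range if and only if λ = ⟨Af, f⟩ for some f ∈ H with ‖f‖ = 1. -/
open scoped InnerProductSpace

/-!
Whether `z` is an eigenvalue of the compression of `A` to a subspace `U`, with eigenvector `x ∈ U`,
depends only on the residual `A x - z • x`: it has to be orthogonal to `U`. On the other hand,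
`z = ⟪x, A x⟫` for a normalized `x` says precisely that the residual is orthogonal to `x`. So the
only thing to find is a `k`-dimensional subspace that contains `x` and is orthogonal to the
residual, and the orthogonal complement of the residual has room for it because its codimension is
at most one.
-/

theorem exists_submodule_between_rank_eq {K V : Type*} [DivisionRing K] [AddCommGroup V]
    [Module K V] {U W : Submodule K V} (hUW : U ≤ W) {n : ℕ} (hU : Module.rank K U ≤ n)
    (hW : n ≤ Module.rank K W) :
    ∃ X : Submodule K V, U ≤ X ∧ X ≤ W ∧ Module.rank K X = n := by
  obtain ⟨s, hsU, hs_span, hs⟩ := exists_linearIndependent K (U : Set V)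
  obtain ⟨t, htW, hst, hWt, ht⟩ :=
    exists_linearIndepOn_id_extension hs (hsU.trans (SetLike.coe_subset_coe.2 hUW))
  have ht_span : Submodule.span K t = W :=
    le_antisymm (Submodule.span_le.2 htW) hWt
  rw [Submodule.span_eq] at hs_span
  have hs_card : s.encard ≤ n := by
    rw [← Set.toENat_cardinalMk, Cardinal.toENat_le_natCast, ← rank_span_set hs, hs_span]
    exact hU
  have ht_card : n ≤ t.encard := by
    rw [← Set.toENat_cardinalMk, Cardinal.natCast_le_toENat, ← rank_span_set ht, ht_span]
    exact hW
  obtain ⟨r, hsr, hrt, hr_card⟩ := Set.exists_superset_subset_encard_eq hst hs_card ht_card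
  refine ⟨Submodule.span K r, hs_span ▸ Submodule.span_mono hsr,
    ht_span ▸ Submodule.span_mono hrt, ?_⟩
  rwa [rank_span_set (ht.mono hrt), ← Cardinal.toENat_eq_natCast, Set.toENat_cardinalMk]

section InnerProductSpace

variable {𝕜 E : Type*} [RCLike 𝕜] [NormedAddCommGroup E] [InnerProductSpace 𝕜 E]

theorem rank_add_rank_orthogonal (U : Submodule 𝕜 E) [U.HasOrthogonalProjection] :
    Module.rank 𝕜 U + Module.rank 𝕜 Uᗮ = Module.rank 𝕜 E := by
  rw [← Submodule.rank_sup_add_rank_inf_eq, U.sup_orthogonal_of_hasOrthogonalProjection,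
    U.inf_orthogonal_eq_bot, rank_top, rank_bot, add_zero]

theorem natCast_le_rank_orthogonal_span_singleton {n : ℕ} (hn : n < Module.rank 𝕜 E) (y : E) :
    n ≤ Module.rank 𝕜 (𝕜 ∙ y)ᗮ := by
  rw [← Cardinal.add_one_le_add_one_iff]
  calc (n : Cardinal) + 1 ≤ Module.rank 𝕜 E := Cardinal.natCast_add_one_le_iff.2 hn
    _ = Module.rank 𝕜 (𝕜 ∙ y) + Module.rank 𝕜 (𝕜 ∙ y)ᗮ := (rank_add_rank_orthogonal _).symm
    _ ≤ Module.rank 𝕜 (𝕜 ∙ y)ᗮ + 1 := by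
      rw [add_comm]
      gcongr
      simpa using rank_span_le (R := 𝕜) {y}

theorem exists_submodule_rank_eq_mem_mem_orthogonal {k : ℕ} (hk : 1 ≤ k)
    (hdim : k < Module.rank 𝕜 E) {x y : E} (hxy : ⟪x, y⟫_𝕜 = 0) :
    ∃ U : Submodule 𝕜 E, Module.rank 𝕜 U = k ∧ x ∈ U ∧ y ∈ Uᗮ := by
  have hx_le : 𝕜 ∙ x ≤ (𝕜 ∙ y)ᗮ := by
    rwa [Submodule.span_singleton_le_iff_mem, Submodule.mem_orthogonal_singleton_iff_inner_left]
  have hx_rank : Module.rank 𝕜 (𝕜 ∙ x) ≤ k :=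
    (rank_span_le {x}).trans (by simpa using hk)
  obtain ⟨U, hxU, hUy, hU⟩ := exists_submodule_between_rank_eq hx_le hx_rank
    (natCast_le_rank_orthogonal_span_singleton hdim y)
  exact ⟨U, hU, (Submodule.span_singleton_le_iff_mem x U).1 hxU,
    fun u hu ↦ Submodule.mem_orthogonal_singleton_iff_inner_left.1 (hUy hu)⟩

theorem starProjection_eq_iff_sub_mem_orthogonal {U : Submodule 𝕜 E} [U.HasOrthogonalProjection]
    {x y : E} (hx : x ∈ U) : U.starProjection y = x ↔ y - x ∈ Uᗮ := by
  rw [← U.starProjection_apply_eq_zero_iff, map_sub, U.starProjection_eq_self_iff.2 hx, sub_eq_zero]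

theorem inner_sub_smul_eq_zero_iff_of_norm_eq_one {x : E} (hx : ‖x‖ = 1) (y : E) (z : 𝕜) :
    ⟪x, y - z • x⟫_𝕜 = 0 ↔ ⟪x, y⟫_𝕜 = z := by
  rw [inner_sub_right, inner_smul_right, inner_self_eq_one_of_norm_eq_one hx, mul_one, sub_eq_zero]

/-- The numerical range `W(A)`. Mathlib's inner product is linear in its second argument, so the
`⟨A x, x⟩` of the literature is `⟪x, A x⟫`. -/
def numericalRange (A : E →ₗ[𝕜] E) : Set 𝕜 :=
  {z | ∃ x : E, ‖x‖ = 1 ∧ ⟪x, A x⟫_𝕜 = z}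

/-- The set `W_{𝒫_k}(A)` of eigenvalues of the compressions of `A` to the ranges of the orthogonal
projections of rank `k`. Orthogonality of `P` is expressed by symmetry rather than through the
adjoint, so that `E` may be incomplete; the eigenvectors are those of `P ∘ A` lying in `ran P`. -/
def rankKFamilyNumericalRange (k : ℕ) (A : E →ₗ[𝕜] E) : Set 𝕜 :=
  {z | ∃ P : E →L[𝕜] E, P.IsSymmetricProjection ∧
    Module.rank 𝕜 (LinearMap.range (P : E →ₗ[𝕜] E)) = k ∧
    ∃ x ∈ LinearMap.range (P : E →ₗ[𝕜] E), x ≠ 0 ∧ P (A x) = z • x}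

variable {A : E →ₗ[𝕜] E} {z : 𝕜} {k : ℕ}

theorem mem_numericalRange_iff_exists_inner_sub_smul_eq_zero :
    z ∈ numericalRange A ↔ ∃ x ≠ 0, ⟪x, A x - z • x⟫_𝕜 = 0 := by
  constructor
  · rintro ⟨x, hx, hz⟩
    exact ⟨x, norm_ne_zero_iff.1 (by simp [hx]),
      (inner_sub_smul_eq_zero_iff_of_norm_eq_one hx _ _).2 hz⟩
  · rintro ⟨x, hx, hz⟩
    have hunit : ‖(‖x‖⁻¹ : 𝕜) • x‖ = 1 := norm_smul_inv_norm hx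
    refine ⟨(‖x‖⁻¹ : 𝕜) • x, hunit,
      (inner_sub_smul_eq_zero_iff_of_norm_eq_one hunit _ _).1 ?_⟩
    rw [map_smul, smul_comm z, ← smul_sub, inner_smul_left, inner_smul_right, hz, mul_zero,
      mul_zero]

theorem mem_rankKFamilyNumericalRange_iff_exists_sub_smul_mem_orthogonal :
    z ∈ rankKFamilyNumericalRange k A ↔
      ∃ U : Submodule 𝕜 E, Module.rank 𝕜 U = k ∧ ∃ x ∈ U, x ≠ 0 ∧ A x - z • x ∈ Uᗮ := by
  constructor
  · rintro ⟨P, hP, hrank, x, hxP, hx, hPA⟩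
    obtain ⟨U, _, hPU⟩ := LinearMap.isSymmetricProjection_iff_eq_coe_starProjection.1 hP
    obtain rfl : P = U.starProjection := ContinuousLinearMap.coe_injective hPU
    rw [U.range_starProjection] at hrank hxP
    exact ⟨U, hrank, x, hxP, hx,
      (starProjection_eq_iff_sub_mem_orthogonal (U.smul_mem z hxP)).1 hPA⟩
  · rintro ⟨U, hrank, x, hxU, hx, hres⟩
    have : FiniteDimensional 𝕜 U :=
      Module.rank_lt_aleph0_iff.1 (hrank ▸ Cardinal.natCast_lt_aleph0)
    refine ⟨U.starProjection, U.isSymmetricProjection_starProjection, ?_, x, ?_, hx,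
      (starProjection_eq_iff_sub_mem_orthogonal (U.smul_mem z hxU)).2 hres⟩ <;>
    rwa [U.range_starProjection]

theorem rankKFamilyNumericalRange_subset_numericalRange :
    rankKFamilyNumericalRange k A ⊆ numericalRange A := by
  intro z hz
  obtain ⟨U, -, x, hxU, hx, hres⟩ :=
    mem_rankKFamilyNumericalRange_iff_exists_sub_smul_mem_orthogonal.1 hz
  exact mem_numericalRange_iff_exists_inner_sub_smul_eq_zero.2 ⟨x, hx, hres x hxU⟩

theorem numericalRange_subset_rankKFamilyNumericalRange (hk : 1 ≤ k)
    (hdim : k < Module.rank 𝕜 E) : numericalRange A ⊆ rankKFamilyNumericalRange k A := by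
  intro z hz
  obtain ⟨x, hx, hres⟩ := mem_numericalRange_iff_exists_inner_sub_smul_eq_zero.1 hz
  obtain ⟨U, hrank, hxU, hresU⟩ := exists_submodule_rank_eq_mem_mem_orthogonal hk hdim hres
  exact mem_rankKFamilyNumericalRange_iff_exists_sub_smul_mem_orthogonal.2
    ⟨U, hrank, x, hxU, hx, hresU⟩

theorem rankKFamilyNumericalRange_eq_numericalRange_general (k : ℕ) (hk : 1 ≤ k)
    (hdim : k < Module.rank 𝕜 E) (A : E →ₗ[𝕜] E) :
    rankKFamilyNumericalRange k A = numericalRange A :=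
  rankKFamilyNumericalRange_subset_numericalRange.antisymm
    (numericalRange_subset_rankKFamilyNumericalRange hk hdim)

end InnerProductSpace

/-- If `H` is a complex Hilbert space with `dim H > k` (possibly infinite-dimensional) and
`k ≥ 1`, then `W_{𝒫_k}(A) = W(A)`: a complex number `λ` is an eigenvalue of the compression
`A_P` (i.e. `P(Af) = λ f` for some nonzero `f ∈ ran(P)`) for some orthogonal projection `P`
with `k`-dimensional range if and only if `λ = ⟨Af, f⟩` for some unit vector `f ∈ H`. -/
theorem rankKFamilyNumericalRange_eq_numericalRange
    {H : Type*} [NormedAddCommGroup H] [InnerProductSpace ℂ H] [CompleteSpace H]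
    (k : ℕ) (hk : 1 ≤ k) (hdim : (k : Cardinal) < Module.rank ℂ H)
    (A : H →L[ℂ] H) (lam : ℂ) :
    (∃ P : H →L[ℂ] H, P.comp P = P ∧ ContinuousLinearMap.adjoint P = P ∧
        Module.rank ℂ (LinearMap.range (P : H →ₗ[ℂ] H)) = k ∧
        ∃ f : H, f ∈ LinearMap.range (P : H →ₗ[ℂ] H) ∧ f ≠ 0 ∧ P (A f) = lam • f) ↔
      ∃ f : H, ‖f‖ = 1 ∧ ⟪f, A f⟫_ℂ = lam := by
  simpa only [rankKFamilyNumericalRange, numericalRange, Set.mem_ofPred_eq,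
    ← ContinuousLinearMap.isStarProjection_iff_isSymmetricProjection, isStarProjection_iff,
    IsIdempotentElem, ContinuousLinearMap.mul_def, ContinuousLinearMap.isSelfAdjoint_iff',
    ContinuousLinearMap.coe_coe, and_assoc] using
    Set.ext_iff.1 (rankKFamilyNumericalRange_eq_numericalRange_general k hk hdim A.toLinearMap) lam
end

section
/- Let k ≥ 1, let H₁, …, H_k be complex Hilbert spaces, H = ⊕_{i=1}^k H_i their Hilbert-space direct sum, and 𝒜 a bounded linear operator on H with block entries A_{ij} : H_j → H_i (1 ≤ i, j ≤ k) bounded linear. Then W_{𝒫_{H₁,…,H_k}}(𝒜) = W_{H₁,…,H_k}(𝒜): a complex number λ is an eigenvalue of the compression 𝒜_P for some orthogonal projection P whose range is spanned by vectors F_i having nonzero i-th component f_i ∈ H_i and all other components zero (i = 1,…,k), if and only if λ is an eigenvalue of the k×k complex matrix with entries ⟨A_{ij} f_j, f_i⟩ for some unit vectors f_i ∈ H_i. -/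
open scoped InnerProductSpace

/-- The Hilbert-space direct sum `⊕_{i} H i` (with the `ℓ²` product inner product) of
complete spaces is complete. -/
instance piLp_completeSpace {k : ℕ} (H : Fin k → Type*) [∀ i, NormedAddCommGroup (H i)]
    [∀ i, CompleteSpace (H i)] : CompleteSpace (PiLp 2 H) :=
  PiLp.completeSpace 2 H

/-!
Scaling the `f i` to unit length does not change the span of the vectors
`F i = PiLp.single 2 i (f i)`, hence not the orthogonal projection onto it either, and makes `F`
orthonormal. The compression then acts on coordinates with respect to `F` as the matrix
`(⟪F i, 𝒜 (F j)⟫) = (⟪f i, A i j (f j)⟫)`.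
-/

section SpanRange

variable {ι R M : Type*} [Semiring R] [AddCommMonoid M] [Module R M]

lemma span_range_smul_eq_of_isUnit {c : ι → R} (hc : ∀ i, IsUnit (c i)) (x : ι → M) :
    Submodule.span R (Set.range fun i => c i • x i) = Submodule.span R (Set.range x) := by
  simp only [Submodule.span_range_eq_iSup, fun i => Submodule.span_singleton_smul_eq (hc i) (x i)]

end SpanRange

section UnitBlocks

open scoped ENNReal

variable {ι : Type*} [DecidableEq ι] {H : ι → Type*} [∀ i, NormedAddCommGroup (H i)]

lemma exists_norm_eq_one_and_span_piLpSingle_eq (𝕜 : Type*) [RCLike 𝕜] [∀ i, NormedSpace 𝕜 (H i)]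
    (p : ℝ≥0∞) {f : ∀ i, H i} (hf : ∀ i, f i ≠ 0) :
    ∃ g : ∀ i, H i, (∀ i, ‖g i‖ = 1) ∧
      Submodule.span 𝕜 (Set.range fun i => PiLp.single p i (g i)) =
        Submodule.span 𝕜 (Set.range fun i => PiLp.single p i (f i)) := by
  have hunit (i : ι) : IsUnit (‖f i‖ : 𝕜)⁻¹ := by simpa using hf i
  refine ⟨fun i => (‖f i‖ : 𝕜)⁻¹ • f i, fun i => norm_smul_inv_norm (hf i), ?_⟩
  simpa only [← PiLp.toLp_single, Pi.single_smul, WithLp.toLp_smul] using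
    span_range_smul_eq_of_isUnit hunit fun i => PiLp.single p i (f i)

end UnitBlocks

section CompressionMatrix

variable {ι 𝕜 E : Type*} [RCLike 𝕜] [SeminormedAddCommGroup E] [InnerProductSpace 𝕜 E]

/-- The matrix with entries `⟪F i, T (F j)⟫`. For orthonormal `F` it represents the compression of
`T` to the span of `F`. -/
def compressionMatrix (T : E →ₗ[𝕜] E) (F : ι → E) : Matrix ι ι 𝕜 :=
  Matrix.of fun i j => ⟪F i, T (F j)⟫_𝕜

variable [Fintype ι]

lemma compressionMatrix_mulVec_apply (T : E →ₗ[𝕜] E) (F : ι → E) (v : ι → 𝕜) (i : ι) :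
    (compressionMatrix T F).mulVec v i = ⟪F i, T (∑ j, v j • F j)⟫_𝕜 := by
  simp [compressionMatrix, Matrix.mulVec, dotProduct, inner_sum, inner_smul_right, mul_comm]

variable {F : ι → E}

lemma isSymmetricProjection_apply_eq_sum_inner_smul {P : E →ₗ[𝕜] E} (hP : P.IsSymmetricProjection)
    (hF : Orthonormal 𝕜 F) (hrange : LinearMap.range P = Submodule.span 𝕜 (Set.range F)) (x : E) :
    P x = ∑ i, ⟪F i, x⟫_𝕜 • F i := by
  have hfix (i : ι) : P (F i) = F i :=
    (LinearMap.IsIdempotentElem.mem_range_iff hP.isIdempotentElem).mp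
      (hrange ▸ Submodule.subset_span ⟨i, rfl⟩)
  obtain ⟨c, hc⟩ : ∃ c : ι → 𝕜, ∑ i, c i • F i = P x :=
    (Submodule.mem_span_range_iff_exists_fun 𝕜).mp (hrange ▸ LinearMap.mem_range_self P x)
  have hcoeff (i : ι) : c i = ⟪F i, x⟫_𝕜 := calc
    c i = ⟪F i, P x⟫_𝕜 := by rw [← hc, hF.inner_right_fintype]
    _ = ⟪F i, x⟫_𝕜 := by rw [← hP.isSymmetric, hfix]
  simp only [← hc, hcoeff]

lemma exists_compression_eigenvector_iff {P : E →ₗ[𝕜] E} (hP : P.IsSymmetricProjection)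
    (hF : Orthonormal 𝕜 F) (hrange : LinearMap.range P = Submodule.span 𝕜 (Set.range F))
    (T : E →ₗ[𝕜] E) (μ : 𝕜) :
    (∃ h ∈ LinearMap.range P, h ≠ 0 ∧ P (T h) = μ • h) ↔
      ∃ v : ι → 𝕜, v ≠ 0 ∧ (compressionMatrix T F).mulVec v = μ • v := by
  have hinj : Function.Injective (Fintype.linearCombination 𝕜 F) :=
    hF.linearIndependent.fintypeLinearCombination_injective
  have hcompress (v : ι → 𝕜) : P (T (Fintype.linearCombination 𝕜 F v)) =
      Fintype.linearCombination 𝕜 F ((compressionMatrix T F).mulVec v) := by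
    simp only [isSymmetricProjection_apply_eq_sum_inner_smul hP hF hrange,
      Fintype.linearCombination_apply, compressionMatrix_mulVec_apply]
  simp only [hrange, ← Fintype.range_linearCombination, LinearMap.mem_range, exists_exists_eq_and,
    hcompress, ← map_smul, hinj.eq_iff, ne_eq, map_eq_zero_iff _ hinj]

end CompressionMatrix

section BlockOperator

variable {ι 𝕜 : Type*} [Fintype ι] [RCLike 𝕜] {H : ι → Type*} [∀ i, NormedAddCommGroup (H i)]
  [∀ i, InnerProductSpace 𝕜 (H i)]

/-- The block numerical range `W_{H₁,…,H_k}` of the operator with block entries `A i j`.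
Since `⟪·, ·⟫_𝕜` is linear in its second argument, `⟨A_{ij} f_j, f_i⟩` is written
`⟪f i, A i j (f j)⟫_𝕜`. -/
def blockNumericalRange (A : ∀ i j, H j →ₗ[𝕜] H i) : Set 𝕜 :=
  {μ | ∃ f : ∀ i, H i, (∀ i, ‖f i‖ = 1) ∧
    ∃ v : ι → 𝕜, v ≠ 0 ∧ (Matrix.of fun i j => ⟪f i, A i j (f j)⟫_𝕜).mulVec v = μ • v}

variable [DecidableEq ι]

/-- The set `W_{𝒫_{H₁,…,H_k}}(𝒜)` of eigenvalues of the compressions of `𝒜` to the spans of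
families `F i`, where `F i` has the nonzero vector `f i` as its `i`-th component and zeros
elsewhere. Orthogonality of `P` is encoded by symmetry, since the adjoint of a continuous linear
map is only available on complete spaces. -/
def projFamilyNumericalRange (𝒜 : PiLp 2 H →ₗ[𝕜] PiLp 2 H) : Set 𝕜 :=
  {μ | ∃ (f : ∀ i, H i) (P : PiLp 2 H →L[𝕜] PiLp 2 H), (∀ i, f i ≠ 0) ∧
    P.toLinearMap.IsSymmetricProjection ∧
    LinearMap.range P.toLinearMap =
      Submodule.span 𝕜 (Set.range fun i => PiLp.single 2 i (f i)) ∧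
    ∃ h ∈ LinearMap.range P.toLinearMap, h ≠ 0 ∧ P (𝒜 h) = μ • h}

lemma inner_piLpSingle_left (i : ι) (a : H i) (x : PiLp 2 H) :
    ⟪PiLp.single 2 i a, x⟫_𝕜 = ⟪a, x i⟫_𝕜 := by
  rw [PiLp.inner_apply, Finset.sum_eq_single i]
  · simp
  · intro j _ hji
    simp [hji]
  · simp

lemma orthonormal_piLpSingle {f : ∀ i, H i} (hf : ∀ i, ‖f i‖ = 1) :
    Orthonormal 𝕜 fun i => PiLp.single 2 i (f i) := by
  refine ⟨fun i => by simp [hf], fun i j hij => ?_⟩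
  simp [inner_piLpSingle_left, hij]

lemma compressionMatrix_piLpSingle {𝒜 : PiLp 2 H →ₗ[𝕜] PiLp 2 H} {A : ∀ i j, H j →ₗ[𝕜] H i}
    (h𝒜 : ∀ x i, 𝒜 x i = ∑ j, A i j (x j)) (f : ∀ i, H i) :
    compressionMatrix 𝒜 (fun i => PiLp.single 2 i (f i)) =
      Matrix.of fun i j => ⟪f i, A i j (f j)⟫_𝕜 := by
  ext i j
  have hentry : 𝒜 (PiLp.single 2 j (f j)) i = A i j (f j) := by
    rw [h𝒜, Finset.sum_eq_single j]
    · simp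
    · intro l _ hlj
      simp [hlj]
    · simp
  simp [compressionMatrix, inner_piLpSingle_left, hentry]

theorem projFamilyNumericalRange_eq_blockNumericalRange_general {𝒜 : PiLp 2 H →ₗ[𝕜] PiLp 2 H}
    {A : ∀ i j, H j →ₗ[𝕜] H i} (h𝒜 : ∀ x i, 𝒜 x i = ∑ j, A i j (x j)) :
    projFamilyNumericalRange 𝒜 = blockNumericalRange A := by
  ext μ
  constructor
  · rintro ⟨f, P, hf, hP, hrange, heigen⟩
    obtain ⟨g, hg, hspan⟩ := exists_norm_eq_one_and_span_piLpSingle_eq 𝕜 2 hf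
    have hiff := exists_compression_eigenvector_iff hP (orthonormal_piLpSingle hg)
      (hrange.trans hspan.symm) 𝒜 μ
    rw [compressionMatrix_piLpSingle h𝒜] at hiff
    exact ⟨g, hg, hiff.mp heigen⟩
  · rintro ⟨f, hf, heigen⟩
    let U := Submodule.span 𝕜 (Set.range fun i => PiLp.single 2 i (f i))
    have : FiniteDimensional 𝕜 U := FiniteDimensional.span_of_finite 𝕜 (Set.finite_range _)
    have hiff := exists_compression_eigenvector_iff U.isSymmetricProjection_starProjection
      (orthonormal_piLpSingle hf) U.range_starProjection 𝒜 μ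
    rw [compressionMatrix_piLpSingle h𝒜] at hiff
    exact ⟨f, U.starProjection, fun i => norm_ne_zero_iff.mp (by simp [hf]),
      U.isSymmetricProjection_starProjection, U.range_starProjection, hiff.mpr heigen⟩

end BlockOperator

/-- `W_{𝒫_{H₁,…,H_k}}(𝒜) = W_{H₁,…,H_k}(𝒜)`: for a bounded block operator `𝒜` on
`H = ⊕_{i=1}^k H_i` with block entries `A i j : H j →L H i`, a complex number `λ` is an
eigenvalue of the compression `𝒜_P` for some orthogonal projection `P` whose range is
spanned by vectors `F_i` having nonzero `i`-th component `f i ∈ H i` and all other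
components zero, if and only if `λ` is an eigenvalue of the `k×k` matrix
`(⟨A_{ij} f_j, f_i⟩)_{i,j}` for some unit vectors `f i ∈ H i` (the block numerical
range of `𝒜`). -/
theorem projFamilyNumericalRange_eq_blockNumericalRange
    (k : ℕ) (hk : 1 ≤ k) (H : Fin k → Type*) [∀ i, NormedAddCommGroup (H i)]
    [∀ i, InnerProductSpace ℂ (H i)] [∀ i, CompleteSpace (H i)]
    (𝒜 : PiLp 2 H →L[ℂ] PiLp 2 H) (A : ∀ i j, H j →L[ℂ] H i)
    (h𝒜 : ∀ (x : PiLp 2 H) (i : Fin k),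
      (WithLp.equiv 2 (∀ i, H i)) (𝒜 x) i = ∑ j, A i j ((WithLp.equiv 2 (∀ i, H i)) x j))
    (lam : ℂ) :
    (∃ (f : ∀ i, H i) (P : PiLp 2 H →L[ℂ] PiLp 2 H), (∀ i, f i ≠ 0) ∧
        P.comp P = P ∧ ContinuousLinearMap.adjoint P = P ∧
        LinearMap.range (P : PiLp 2 H →ₗ[ℂ] PiLp 2 H) = Submodule.span ℂ
          (Set.range fun i => (WithLp.equiv 2 (∀ i, H i)).symm (Pi.single i (f i))) ∧
        ∃ h : PiLp 2 H, h ∈ LinearMap.range (P : PiLp 2 H →ₗ[ℂ] PiLp 2 H) ∧ h ≠ 0 ∧ P (𝒜 h) = lam • h) ↔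
    (∃ f : ∀ i, H i, (∀ i, ‖f i‖ = 1) ∧
        ∃ v : Fin k → ℂ, v ≠ 0 ∧
          (Matrix.of fun i j => ⟪f i, A i j (f j)⟫_ℂ).mulVec v = lam • v) := by
  have hiff := Set.ext_iff.mp (projFamilyNumericalRange_eq_blockNumericalRange_general
    (𝒜 := 𝒜.toLinearMap) (A := fun i j => (A i j).toLinearMap) h𝒜) lam
  simp only [projFamilyNumericalRange,
    ← ContinuousLinearMap.isStarProjection_iff_isSymmetricProjection, isStarProjection_iff,
    and_assoc] at hiff
  exact hiff
end
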